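/- Let n ≥ 2 and set a := (n−2)/2 if 2 ≤ n ≤ 10, and a := √(n−1) + 1 if n ≥ 11. Let f ∈ C¹(ℝ) and let u be a W^{3,1}_loc(ℝⁿ) stable solution of div(∇u/√(1+|∇u|²)) = −f(u) in ℝⁿ. Set z := |∇u|². Then there exists a dimensional constant C > 0 such that for all 0 < ρ < R: (1/ρ^{2a}) ∫_{B_ρ} z²/(1+z)^{3/2} dx ≤ (C/R^{2a}) ∫_{B_{2R}∖B_R} z dx. -/

import Mathlib

open MeasureTheory Metric Real Filter Asymptotics Bornology
open scoped RealInnerProductSpace Topology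

noncomputable section

/-- Euclidean space `ℝⁿ`. -/
abbrev Euc (n : ℕ) := EuclideanSpace ℝ (Fin n)

/-- `φ` is an admissible test function on `Ω`: smooth with compact support contained in `Ω`
(i.e. `φ ∈ C_c^∞(Ω)`). -/
def IsTestFun {n : ℕ} (Ω : Set (Euc n)) (φ : Euc n → ℝ) : Prop :=
  ContDiff ℝ (⊤ : ℕ∞) φ ∧ HasCompactSupport φ ∧ tsupport φ ⊆ Ω

/-- `u` is a weak solution of the mean curvature equation
`div(∇u/√(1+|∇u|²)) = -f(u)` in `Ω`:  `u ∈ W^{1,1}_loc(Ω)`, `f(u) ∈ L¹_loc(Ω)` and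
`∫_Ω ∇u·∇φ/√(1+|∇u|²) = ∫_Ω f(u) φ` for every `φ ∈ C_c^∞(Ω)`. -/
def IsWeakSolution {n : ℕ} (Ω : Set (Euc n)) (f : ℝ → ℝ) (u : Euc n → ℝ) : Prop :=
  LocallyIntegrableOn u Ω ∧
  LocallyIntegrableOn (fun x => ‖gradient u x‖) Ω ∧
  LocallyIntegrableOn (fun x => f (u x)) Ω ∧
  ∀ φ : Euc n → ℝ, IsTestFun Ω φ →
    ∫ x in Ω, ⟪gradient u x, gradient φ x⟫ / Real.sqrt (1 + ‖gradient u x‖ ^ 2)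
      = ∫ x in Ω, f (u x) * φ x

/-- `u` is a stable solution of `div(∇u/√(1+|∇u|²)) = -f(u)` in `Ω`: it is a weak solution,
`f'(u) ∈ L¹_loc(Ω)` and the second variation of the energy at `u` is nonnegative:
`∫_Ω f'(u) ξ² ≤ ∫_Ω (|∇ξ|²/√(1+|∇u|²) - (∇u·∇ξ)²/(1+|∇u|²)^{3/2})` for all `ξ ∈ C_c^∞(Ω)`. -/
def IsStableSolution {n : ℕ} (Ω : Set (Euc n)) (f : ℝ → ℝ) (u : Euc n → ℝ) : Prop :=
  IsWeakSolution Ω f u ∧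
  LocallyIntegrableOn (fun x => deriv f (u x)) Ω ∧
  ∀ ξ : Euc n → ℝ, IsTestFun Ω ξ →
    ∫ x in Ω, deriv f (u x) * ξ x ^ 2 ≤
      ∫ x in Ω, (‖gradient ξ x‖ ^ 2 / Real.sqrt (1 + ‖gradient u x‖ ^ 2)
        - ⟪gradient u x, gradient ξ x⟫ ^ 2 / (1 + ‖gradient u x‖ ^ 2) ^ ((3:ℝ)/2))

/-- A vector field `g` belongs to the Morrey space `M^p(Ω)`: there is `K > 0` with
`∫_{B_ρ(x₀) ∩ Ω} |g| ≤ K ρ^{n(1-1/p)}` for all `x₀ ∈ Ω` and `0 < ρ ≤ diam Ω`. -/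
def MemMorrey {n : ℕ} (Ω : Set (Euc n)) (p : ℝ) (g : Euc n → Euc n) : Prop :=
  ∃ K > (0:ℝ), ∀ x₀ ∈ Ω, ∀ ρ : ℝ, 0 < ρ → ρ ≤ Metric.diam Ω →
    ∫ x in Metric.ball x₀ ρ ∩ Ω, ‖g x‖ ≤ K * ρ ^ ((n : ℝ) * (1 - 1 / p))

/-!
Write `W = √(1 + |∇u|²)` and test stability with `ξ = ⟪∇u, x⟫ η`: the function `⟪∇u, x⟫` generates
the dilations of `u`, so differentiating the equation along dilations expresses `f'(u) ⟪∇u, x⟫` as a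
divergence. After one further integration by parts all second derivatives of `u` cancel, and what
remains is the nonnegativity of the integral of an expression in `∇u`, `x`, `η` and `∇η` alone.

For `η = |x|⁻ᵃ` that expression is `η² W⁻³` times a quadratic polynomial in `z = |∇u|²` and the
square `s ≤ z` of the radial derivative, and completing a square shows it to be nonpositive as soon
as `2a ≤ n - 2` and `a² - 2a ≤ n - 2`. Replacing `|x|²` by `ρ² + |x|²` makes `η` smooth and lowers
the effective exponent to `a |x|² / (ρ² + |x|²)`; by convexity in the exponent this gains a definite
negative multiple of `η² z² W⁻³` on `B_ρ`. A cutoff in `R < |x| < 2R` costs at most a multiple of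
`R⁻²ᵃ z` there.
-/

open scoped Gradient ContDiff

section Approximation

lemma tendsto_integral_comp_of_tendstoUniformly {X V ι : Type*} [PseudoMetricSpace X]
    [ProperSpace X] [MeasurableSpace X] [OpensMeasurableSpace X] [NormedAddCommGroup V]
    [ProperSpace V] {μ : Measure X} [IsFiniteMeasureOnCompacts μ] {l : Filter ι} [l.NeBot]
    [l.IsCountablyGenerated] {F : X × V → ℝ} (hF : Continuous F) (hF0 : ∀ x, F (x, 0) = 0)
    {v : ι → X → V} {w : X → V} (hv : ∀ i, Continuous (v i)) {K : Set X} (hK : IsCompact K)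
    (hvK : ∀ i, ∀ x ∉ K, v i x = 0) (hvw : TendstoUniformly v w l) :
    Tendsto (fun i => ∫ x, F (x, v i x) ∂μ) l (𝓝 (∫ x, F (x, w x) ∂μ)) := by
  have hw : Continuous w := hvw.continuous (.of_forall hv)
  have hKc : IsCompact (closure K) := hK.closure
  obtain ⟨B, hB⟩ := (hKc.image (f := fun x => (x, w x)) (by fun_prop)).cthickening (r := 1)
    |>.exists_bound_of_continuousOn hF.continuousOn
  refine tendsto_integral_filter_of_dominated_convergence ((closure K).indicator fun _ => B)
    (.of_forall fun i => ?_) ?_ ?_ (.of_forall fun x => ?_)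
  · have := hv i
    exact (hF.comp (by fun_prop)).aestronglyMeasurable
  · filter_upwards [Metric.tendstoUniformly_iff.1 hvw 1 one_pos] with i hi
    refine .of_forall fun x => ?_
    by_cases hx : x ∈ closure K
    · rw [Set.indicator_of_mem hx]
      refine hB _ (mem_cthickening_of_dist_le _ (x, w x) _ _ ⟨x, hx, rfl⟩ ?_)
      simpa [Prod.dist_eq, dist_comm] using (hi x).le
    · rw [Set.indicator_of_notMem hx, hvK i x fun h => hx (subset_closure h), hF0, norm_zero]
  · exact (integrable_indicator_iff isClosed_closure.measurableSet).2
      (integrableOn_const hKc.measure_ne_top)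
  · exact (hF.tendsto _).comp (tendsto_const_nhds.prodMk_nhds (hvw.tendsto_at x))

variable {E : Type*} [NormedAddCommGroup E] [NormedSpace ℝ E] [FiniteDimensional ℝ E]
  [MeasurableSpace E] [BorelSpace E] {ξ : E → ℝ}

lemma exists_contDiff_forall_dist_le_dist_fderiv_le (hξ : ContDiff ℝ 1 ξ)
    (hc : HasCompactSupport ξ) {ε : ℝ} (hε : 0 < ε) :
    ∃ ζ : E → ℝ, ContDiff ℝ ∞ ζ ∧ tsupport ζ ⊆ cthickening ε (tsupport ξ) ∧
      ∀ x, dist (ζ x) (ξ x) ≤ ε ∧ dist (fderiv ℝ ζ x) (fderiv ℝ ξ x) ≤ ε := by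
  have hξ' : Continuous (fderiv ℝ ξ) := hξ.continuous_fderiv one_ne_zero
  have hunif : UniformContinuous fun x => (ξ x, fderiv ℝ ξ x) :=
    (hc.uniformContinuous_of_continuous hξ.continuous).prodMk
      ((hc.fderiv ℝ).uniformContinuous_of_continuous hξ')
  obtain ⟨δ, hδ, hclose⟩ := Metric.uniformContinuous_iff.1 hunif ε hε
  let r := min ε δ
  have hr : 0 < r := lt_min hε hδ
  let b : ContDiffBump (0 : E) := ⟨r / 2, r, half_pos hr, half_lt_self hr⟩
  let μ : Measure E := .addHaar
  let ζ : E → ℝ := convolution (b.normed μ) ξ (.lsmul ℝ ℝ) μ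
  have hζ' (x : E) : fderiv ℝ ζ x = convolution (b.normed μ) (fderiv ℝ ξ) (.lsmul ℝ ℝ) μ x :=
    (hc.hasFDerivAt_convolution_right (.lsmul ℝ ℝ)
      (b.continuous_normed (μ := μ)).locallyIntegrable hξ x).fderiv
  have hball {x y : E} (hy : y ∈ ball x r) : dist (ξ y, fderiv ℝ ξ y) (ξ x, fderiv ℝ ξ x) ≤ ε :=
    (hclose (lt_of_lt_of_le hy (min_le_right _ _))).le
  refine ⟨ζ, b.hasCompactSupport_normed.contDiff_convolution_left _ b.contDiff_normed
    hξ.continuous.locallyIntegrable, closure_minimal ?_ isClosed_cthickening, fun x => ⟨?_, ?_⟩⟩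
  · refine (support_convolution_subset _).trans ?_
    rw [b.support_normed_eq]
    rintro _ ⟨y, hy, z, hz, rfl⟩
    refine mem_cthickening_of_dist_le _ z _ _ (subset_tsupport _ hz) ?_
    simpa using hy.le.trans (min_le_left ε δ)
  · exact b.dist_normed_convolution_le hξ.continuous.aestronglyMeasurable
      fun y hy => (le_max_left _ _).trans (hball hy)
  · rw [hζ']
    exact b.dist_normed_convolution_le hξ'.aestronglyMeasurable
      fun y hy => (le_max_right _ _).trans (hball hy)

lemma integral_comp_fderiv_nonneg_of_forall_contDiff_infty {μ : Measure E}
    [IsFiniteMeasureOnCompacts μ] {F : E × ℝ × (E →L[ℝ] ℝ) → ℝ} (hF : Continuous F)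
    (hF0 : ∀ x, F (x, 0, 0) = 0)
    (hsmooth : ∀ ζ : E → ℝ, ContDiff ℝ ∞ ζ → HasCompactSupport ζ →
      0 ≤ ∫ x, F (x, ζ x, fderiv ℝ ζ x) ∂μ)
    (hξ : ContDiff ℝ 1 ξ) (hc : HasCompactSupport ξ) :
    0 ≤ ∫ x, F (x, ξ x, fderiv ℝ ξ x) ∂μ := by
  have : ProperSpace E := FiniteDimensional.proper ℝ E
  have : ProperSpace (E →L[ℝ] ℝ) := FiniteDimensional.proper ℝ _
  choose ζ hζ hζsupp hζdist using fun k : ℕ =>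
    exists_contDiff_forall_dist_le_dist_fderiv_le hξ hc (Nat.one_div_pos_of_nat (n := k))
  set K := cthickening 1 (tsupport ξ)
  have hK : IsCompact K := hc.isCompact.cthickening
  have hζK (k) : tsupport (ζ k) ⊆ K := (hζsupp k).trans
    (cthickening_mono (by simpa using Nat.one_div_le_one_div (α := ℝ) k.zero_le) _)
  have hlim : TendstoUniformly (fun k x => (ζ k x, fderiv ℝ (ζ k) x))
      (fun x => (ξ x, fderiv ℝ ξ x)) atTop := by
    rw [Metric.tendstoUniformly_iff]
    intro ε hε
    filter_upwards [tendsto_one_div_add_atTop_nhds_zero_nat.eventually_lt_const hε] with k hk x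
    rw [dist_comm]
    exact (max_le (hζdist k x).1 (hζdist k x).2).trans_lt hk
  refine ge_of_tendsto' (tendsto_integral_comp_of_tendstoUniformly hF hF0 (fun k => ?_) hK
    (fun k x hx => ?_) hlim) fun k => hsmooth (ζ k) (hζ k)
      (hK.of_isClosed_subset (isClosed_tsupport _) (hζK k))
  · exact (hζ k).continuous.prodMk ((hζ k).continuous_fderiv (by simp))
  · have hx' : x ∉ tsupport (ζ k) := fun h => hx (hζK k h)
    rw [image_eq_zero_of_notMem_tsupport hx',
      image_eq_zero_of_notMem_tsupport fun h => hx' (tsupport_fderiv_subset ℝ h), Prod.mk_zero_zero]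

end Approximation

section Gradient

variable {E : Type*} [NormedAddCommGroup E] [InnerProductSpace ℝ E] [CompleteSpace E]
  {u v : E → ℝ} {x : E}

lemma contDiff_gradient {k m : WithTop ℕ∞} (hu : ContDiff ℝ k u) (hmk : m + 1 ≤ k) :
    ContDiff ℝ m (∇ u) :=
  (InnerProductSpace.toDual ℝ E).symm.toContinuousLinearEquiv.contDiff.comp (hu.fderiv_right hmk)

lemma gradient_fun_mul (hu : DifferentiableAt ℝ u x) (hv : DifferentiableAt ℝ v x) :
    ∇ (fun y => u y * v y) x = u x • ∇ v x + v x • ∇ u x := by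
  refine ext_inner_right ℝ fun h => ?_
  simp only [inner_gradient_left, inner_add_left, real_inner_smul_left]
  rw [fderiv_fun_mul hu hv]
  rfl

lemma gradient_comp_norm_sq {g : ℝ → ℝ} (hg : DifferentiableAt ℝ g (‖x‖ ^ 2)) :
    ∇ (fun y => g (‖y‖ ^ 2)) x = (2 * deriv g (‖x‖ ^ 2)) • x := by
  refine ext_inner_right ℝ fun h => ?_
  have hcomp := hg.hasDerivAt.comp_hasFDerivAt x (hasStrictFDerivAt_norm_sq x).hasFDerivAt
  rw [inner_gradient_left, show fderiv ℝ (fun y => g (‖y‖ ^ 2)) x = _ from hcomp.fderiv]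
  simp only [smul_apply, innerSL_apply_apply, real_inner_smul_left, nsmul_eq_mul, smul_eq_mul]
  ring

lemma inner_fderiv_gradient (hu : ContDiff ℝ 2 u) (x h k : E) :
    ⟪fderiv ℝ (∇ u) x h, k⟫ = fderiv ℝ (fderiv ℝ u) x h k := by
  have hDu : DifferentiableAt ℝ (fderiv ℝ u) x :=
    (hu.fderiv_right (m := 1) le_rfl).differentiable one_ne_zero x
  have hcomp := (InnerProductSpace.toDual ℝ E).symm.toContinuousLinearEquiv.hasFDerivAt.comp x
    hDu.hasFDerivAt
  rw [show fderiv ℝ (∇ u) x = _ from hcomp.fderiv]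
  exact InnerProductSpace.toDual_symm_apply

lemma inner_fderiv_gradient_comm (hu : ContDiff ℝ 2 u) (x h k : E) :
    ⟪fderiv ℝ (∇ u) x h, k⟫ = ⟪h, fderiv ℝ (∇ u) x k⟫ := by
  rw [real_inner_comm (fderiv ℝ (∇ u) x k), inner_fderiv_gradient hu, inner_fderiv_gradient hu]
  exact hu.contDiffAt.isSymmSndFDerivAt (by simp) h k

lemma gradient_inner_gradient_self (hu : ContDiff ℝ 2 u) (x : E) :
    ∇ (fun y => ⟪∇ u y, y⟫) x = fderiv ℝ (∇ u) x x + ∇ u x := by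
  refine ext_inner_right ℝ fun h => ?_
  have hDu : DifferentiableAt ℝ (∇ u) x :=
    (contDiff_gradient hu (m := 1) le_rfl).differentiable one_ne_zero x
  rw [inner_gradient_left, fderiv_inner_apply ℝ hDu differentiableAt_fun_id, fderiv_fun_id,
    inner_add_left, inner_fderiv_gradient_comm hu, real_inner_comm (fderiv ℝ (∇ u) x x), add_comm]
  rfl

end Gradient

section Divergence

variable {E : Type*} [NormedAddCommGroup E] [NormedSpace ℝ E]

/-- The divergence `div V = ∑ᵢ ∂ᵢVᵢ` of a vector field, written without coordinates as the trace of
its derivative. -/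
def divergence (V : E → E) (x : E) : ℝ :=
  LinearMap.trace ℝ E (fderiv ℝ V x)

/-- The derivative of `V` in the direction of the dilations `V ↦ t⁻¹ V(t ·)` at `t = 1`. -/
def dilationDeriv (V : E → E) (x : E) : E :=
  fderiv ℝ V x x - V x

variable {V : E → E}

lemma contDiff_dilationDeriv {k m : WithTop ℕ∞} (hV : ContDiff ℝ k V) (hmk : m + 1 ≤ k) :
    ContDiff ℝ m (dilationDeriv V) :=
  ((hV.fderiv_right hmk).clm_apply contDiff_id).sub (hV.of_le (le_self_add.trans hmk))

variable [FiniteDimensional ℝ E]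

variable (E) in
/-- The trace on `E →L[ℝ] E`, as a continuous linear functional. -/
def traceCLM : (E →L[ℝ] E) →L[ℝ] ℝ :=
  (LinearMap.trace ℝ E ∘ₗ ContinuousLinearMap.coeLM ℝ).toContinuousLinearMap

lemma contDiff_divergence {k m : WithTop ℕ∞} (hV : ContDiff ℝ k V) (hmk : m + 1 ≤ k) :
    ContDiff ℝ m (divergence V) :=
  (traceCLM E).contDiff.comp (hV.fderiv_right hmk)

lemma divergence_dilationDeriv (hV : ContDiff ℝ 2 V) (x : E) :
    divergence (dilationDeriv V) x = fderiv ℝ (divergence V) x x := by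
  have hDV : DifferentiableAt ℝ (fderiv ℝ V) x :=
    (hV.fderiv_right (m := 1) le_rfl).differentiable one_ne_zero x
  have hVx : DifferentiableAt ℝ V x := hV.differentiable two_ne_zero x
  have hdiv : HasFDerivAt (divergence V) (traceCLM E ∘L fderiv ℝ (fderiv ℝ V) x) x :=
    (traceCLM E).hasFDerivAt.comp x hDV.hasFDerivAt
  have hdil : fderiv ℝ (dilationDeriv V) x = fderiv ℝ (fderiv ℝ V) x x := by
    ext h
    have hderiv := (hDV.hasFDerivAt.clm_apply (hasFDerivAt_id x)).sub hVx.hasFDerivAt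
    rw [show fderiv ℝ (dilationDeriv V) x = _ from hderiv.fderiv]
    simpa using hV.contDiffAt.isSymmSndFDerivAt (by simp) h x
  rw [divergence, hdil, hdiv.fderiv]
  rfl

lemma divergence_smul_id {H : E → ℝ} {x : E} (hH : DifferentiableAt ℝ H x) :
    divergence (fun y => H y • y) x = Module.finrank ℝ E * H x + fderiv ℝ H x x := by
  rw [divergence, fderiv_fun_smul hH differentiableAt_fun_id, fderiv_fun_id]
  simp only [ContinuousLinearMap.toLinearMap_add, ContinuousLinearMap.toLinearMap_smul,
    map_add, map_smul, ContinuousLinearMap.coe_id, LinearMap.trace_id, smul_eq_mul]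
  rw [mul_comm]
  congr 1
  exact LinearMap.trace_smulRight (fderiv ℝ H x : E →ₗ[ℝ] ℝ) x

end Divergence

section IntegrationByParts

variable {E : Type*} [NormedAddCommGroup E] [InnerProductSpace ℝ E] [FiniteDimensional ℝ E]
  [MeasurableSpace E] [BorelSpace E] {μ : Measure E} [μ.IsAddHaarMeasure] {V : E → E} {ψ : E → ℝ}

lemma integral_mul_divergence (hV : ContDiff ℝ 1 V) (hψ : ContDiff ℝ 1 ψ)
    (hc : HasCompactSupport ψ) :
    ∫ x, ψ x * divergence V x ∂μ = -∫ x, fderiv ℝ ψ x (V x) ∂μ := by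
  let e := stdOrthonormalBasis ℝ E
  have hVi (i) : ContDiff ℝ 1 fun x => ⟪e i, V x⟫ := contDiff_const.inner ℝ hV
  have hdiv (x) : divergence V x = ∑ i, fderiv ℝ (fun y => ⟪e i, V y⟫) x (e i) := by
    rw [divergence, LinearMap.trace_eq_sum_inner _ e]
    refine Finset.sum_congr rfl fun i _ => ?_
    rw [fderiv_inner_apply ℝ (differentiableAt_const _) (hV.differentiable one_ne_zero x)]
    simp
  have hψV (x) : fderiv ℝ ψ x (V x) = ∑ i, fderiv ℝ ψ x (e i) * ⟪e i, V x⟫ := by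
    conv_lhs => rw [← e.sum_repr' (V x)]
    simp [mul_comm]
  have hint (i) : Integrable (fun x => fderiv ℝ ψ x (e i) * ⟪e i, V x⟫) μ :=
    (((hψ.continuous_fderiv one_ne_zero).clm_apply continuous_const).mul
      (hVi i).continuous).integrable_of_hasCompactSupport (hc.fderiv_apply (𝕜 := ℝ) _).mul_right
  have hint' (i) : Integrable (fun x => ψ x * fderiv ℝ (fun y => ⟪e i, V y⟫) x (e i)) μ :=
    (hψ.continuous.mul (((hVi i).continuous_fderiv one_ne_zero).clm_apply
      continuous_const)).integrable_of_hasCompactSupport hc.mul_right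
  simp only [hdiv, hψV, Finset.mul_sum]
  rw [integral_finsetSum _ fun i _ => hint' i, integral_finsetSum _ fun i _ => hint i,
    ← Finset.sum_neg_distrib]
  exact Finset.sum_congr rfl fun i _ => integral_mul_fderiv_eq_neg_fderiv_mul_of_integrable
    (hint i) (hint' i) ((hψ.continuous.mul (hVi i).continuous).integrable_of_hasCompactSupport
      hc.mul_right) (fun x _ => hψ.differentiable one_ne_zero x)
    fun x _ => (hVi i).differentiable one_ne_zero x

lemma integral_mul_fderiv_self {H : E → ℝ} (hH : ContDiff ℝ 1 H) (hψ : ContDiff ℝ 1 ψ)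
    (hc : HasCompactSupport ψ) :
    ∫ x, ψ x * fderiv ℝ H x x ∂μ =
      -∫ x, H x * (Module.finrank ℝ E * ψ x + fderiv ℝ ψ x x) ∂μ := by
  have hdiv (x) : ψ x * fderiv ℝ H x x =
      ψ x * divergence (fun y => H y • y) x - ψ x * (Module.finrank ℝ E * H x) := by
    rw [divergence_smul_id (hH.differentiable one_ne_zero x)]
    ring
  have hflux (x) : H x * (Module.finrank ℝ E * ψ x + fderiv ℝ ψ x x) =
      fderiv ℝ ψ x (H x • x) + ψ x * (Module.finrank ℝ E * H x) := by
    rw [map_smul, smul_eq_mul]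
    ring
  have hHx : ContDiff ℝ 1 fun x => H x • x := hH.smul contDiff_id
  have hint : Integrable (fun x => ψ x * (Module.finrank ℝ E * H x)) μ :=
    (hψ.continuous.mul (continuous_const.mul hH.continuous)).integrable_of_hasCompactSupport
      hc.mul_right
  simp only [hdiv, hflux]
  rw [integral_sub _ hint, integral_add _ hint, integral_mul_divergence hHx hψ hc]
  · ring
  · exact ((hψ.continuous_fderiv one_ne_zero).clm_apply hHx.continuous)
      |>.integrable_of_hasCompactSupport ((hc.fderiv ℝ).mono fun x hx h => hx (by simp [h]))
  · exact (hψ.continuous.mul (contDiff_divergence (m := 0) hHx (by simp)).continuous)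
      |>.integrable_of_hasCompactSupport hc.mul_right

end IntegrationByParts

section AreaIntegrand

variable {E : Type*} [NormedAddCommGroup E]

/-- The area integrand `W(p) = √(1 + |p|²)`; the area of the graph of `u` is `∫ W(∇u)`. -/
def areaDensity (p : E) : ℝ :=
  √(1 + ‖p‖ ^ 2)

lemma areaDensity_sq (p : E) : areaDensity p ^ 2 = 1 + ‖p‖ ^ 2 :=
  sq_sqrt (by positivity)

lemma one_le_areaDensity (p : E) : 1 ≤ areaDensity p :=
  one_le_sqrt.2 (by simp)

lemma areaDensity_pos (p : E) : 0 < areaDensity p :=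
  one_pos.trans_le (one_le_areaDensity p)

lemma one_add_norm_sq_rpow_three_halves (p : E) :
    (1 + ‖p‖ ^ 2) ^ ((3 : ℝ) / 2) = areaDensity p ^ 3 := by
  rw [rpow_div_two_eq_sqrt _ (by positivity)]
  exact_mod_cast rpow_natCast _ 3

variable [InnerProductSpace ℝ E]

/-- The gradient `p / W(p)` of the area integrand, so that the mean curvature operator is
`u ↦ div (areaFlux (∇u))`. -/
def areaFlux (p : E) : E :=
  (areaDensity p)⁻¹ • p

lemma contDiff_areaDensity {k : WithTop ℕ∞} : ContDiff ℝ k (areaDensity (E := E)) :=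
  (contDiff_const.add (contDiff_norm_sq ℝ)).sqrt fun p => by positivity

lemma contDiff_areaFlux {k : WithTop ℕ∞} : ContDiff ℝ k (areaFlux (E := E)) :=
  (contDiff_areaDensity.inv fun p => (areaDensity_pos p).ne').smul contDiff_id

lemma hasFDerivAt_areaDensity (p : E) :
    HasFDerivAt areaDensity ((areaDensity p)⁻¹ • innerSL ℝ p) p := by
  have hsq := (hasStrictFDerivAt_norm_sq p).hasFDerivAt.const_add 1
  refine (hsq.sqrt (by positivity)).congr_fderiv ?_
  rw [two_nsmul, ← two_smul ℝ, smul_smul, areaDensity]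
  congr 1
  field

lemma hasFDerivAt_inv_areaDensity (p : E) :
    HasFDerivAt (fun q => (areaDensity q)⁻¹) (-(areaDensity p ^ 3)⁻¹ • innerSL ℝ p) p := by
  have hW := (areaDensity_pos p).ne'
  refine ((hasDerivAt_inv hW).comp_hasFDerivAt p (hasFDerivAt_areaDensity p)).congr_fderiv ?_
  rw [smul_smul]
  congr 1
  field

lemma fderiv_areaFlux_apply (p v : E) :
    fderiv ℝ areaFlux p v = (areaDensity p)⁻¹ • v - (⟪p, v⟫ / areaDensity p ^ 3) • p := by
  have hflux := (hasFDerivAt_inv_areaDensity p).smul (hasFDerivAt_id p)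
  rw [show fderiv ℝ areaFlux p = _ from hflux.fderiv, sub_eq_add_neg, ← neg_smul]
  simp only [add_apply, smul_apply, ContinuousLinearMap.smulRight_apply,
    ContinuousLinearMap.id_apply, innerSL_apply_apply, id_eq, smul_eq_mul]
  congr 2
  ring

lemma inner_fderiv_areaFlux_apply (p v w : E) :
    ⟪fderiv ℝ areaFlux p v, w⟫ = ⟪v, w⟫ / areaDensity p - ⟪p, v⟫ * ⟪p, w⟫ / areaDensity p ^ 3 := by
  rw [fderiv_areaFlux_apply, inner_sub_left, real_inner_smul_left, real_inner_smul_left]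
  ring

lemma inner_fderiv_areaFlux_apply_comm (p v w : E) :
    ⟪fderiv ℝ areaFlux p v, w⟫ = ⟪v, fderiv ℝ areaFlux p w⟫ := by
  rw [real_inner_comm (fderiv ℝ areaFlux p w), inner_fderiv_areaFlux_apply,
    inner_fderiv_areaFlux_apply, real_inner_comm]
  ring

lemma fderiv_areaFlux_self_add (p : E) :
    fderiv ℝ areaFlux p p + areaFlux p = ((2 + ‖p‖ ^ 2) / areaDensity p ^ 3) • p := by
  have hW := areaDensity_pos p
  rw [fderiv_areaFlux_apply, areaFlux, ← sub_smul, ← add_smul, real_inner_self_eq_norm_sq]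
  congr 1
  field_simp
  rw [areaDensity_sq]
  ring

lemma hasFDerivAt_norm_sq_div_areaDensity (p : E) :
    HasFDerivAt (fun q => ‖q‖ ^ 2 / areaDensity q)
      (((2 + ‖p‖ ^ 2) / areaDensity p ^ 3) • innerSL ℝ p) p := by
  have hW := areaDensity_pos p
  have hsub (q : E) : ‖q‖ ^ 2 / areaDensity q = areaDensity q - (areaDensity q)⁻¹ := by
    have := areaDensity_pos q
    field_simp
    rw [areaDensity_sq]
    ring
  simp only [hsub]
  refine ((hasFDerivAt_areaDensity p).sub (hasFDerivAt_inv_areaDensity p)).congr_fderiv ?_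
  rw [← sub_smul]
  congr 1
  field_simp
  rw [areaDensity_sq]
  ring

end AreaIntegrand

section Solutions

variable {n : ℕ} {f : ℝ → ℝ} {u : Euc n → ℝ}

lemma IsWeakSolution.divergence_areaFlux (h : IsWeakSolution Set.univ f u) (hf : Continuous f)
    (hu : ContDiff ℝ 2 u) (x : Euc n) :
    divergence (fun y => areaFlux (∇ u y)) x = -f (u x) := by
  have hV : ContDiff ℝ 1 fun y => areaFlux (∇ u y) :=
    contDiff_areaFlux.comp (contDiff_gradient hu le_rfl)
  have hdiv : Continuous (divergence fun y => areaFlux (∇ u y)) :=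
    (contDiff_divergence (m := 0) hV le_rfl).continuous
  have hfu : Continuous fun y => -f (u y) := (hf.comp hu.continuous).neg
  refine congrFun ((hdiv.ae_eq_iff_eq volume hfu).1 (ae_eq_of_integral_contDiff_smul_eq
    hdiv.locallyIntegrable hfu.locallyIntegrable fun φ hφ hc => ?_)) x
  have hweak := h.2.2.2 φ ⟨hφ, hc, Set.subset_univ _⟩
  simp only [Measure.restrict_univ] at hweak
  simp only [smul_eq_mul, mul_neg, integral_neg]
  rw [integral_mul_divergence hV (hφ.of_le (by simp)) hc, neg_inj]
  calc ∫ y, fderiv ℝ φ y (areaFlux (∇ u y))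
      = ∫ y, ⟪∇ u y, ∇ φ y⟫ / √(1 + ‖∇ u y‖ ^ 2) := by
        congr with y
        rw [← inner_gradient_left, areaFlux, real_inner_smul_right, real_inner_comm, inv_mul_eq_div,
          areaDensity]
    _ = ∫ y, φ y * f (u y) := by simp only [hweak, mul_comm]

-- The equation differentiated along dilations: `⟪∇u, x⟫` generates `t ↦ u(tx)`.
lemma IsWeakSolution.integral_deriv_mul_inner_mul (h : IsWeakSolution Set.univ f u)
    (hf : ContDiff ℝ 1 f) (hu : ContDiff ℝ 3 u) {ψ : Euc n → ℝ} (hψ : ContDiff ℝ 1 ψ)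
    (hc : HasCompactSupport ψ) :
    ∫ x, deriv f (u x) * ⟪∇ u x, x⟫ * ψ x =
      ∫ x, fderiv ℝ ψ x (dilationDeriv (fun y => areaFlux (∇ u y)) x) := by
  have hV : ContDiff ℝ 2 fun y => areaFlux (∇ u y) :=
    contDiff_areaFlux.comp (contDiff_gradient hu le_rfl)
  have hlin (x) : deriv f (u x) * ⟪∇ u x, x⟫ =
      -divergence (dilationDeriv fun y => areaFlux (∇ u y)) x := by
    have hfu : HasFDerivAt (fun y => -f (u y)) (-(deriv f (u x) • fderiv ℝ u x)) x :=
      ((hf.differentiable one_ne_zero (u x)).hasDerivAt.comp_hasFDerivAt x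
        (hu.differentiable three_ne_zero x).hasFDerivAt).neg
    rw [divergence_dilationDeriv hV,
      funext (h.divergence_areaFlux hf.continuous (hu.of_le (by norm_num))), hfu.fderiv]
    simp [inner_gradient_left]
  simp only [hlin, mul_comm _ (ψ _), mul_neg, integral_neg]
  rw [integral_mul_divergence (contDiff_dilationDeriv hV le_rfl) hψ hc, neg_neg]

lemma IsStableSolution.integral_nonneg_of_contDiff_one (h : IsStableSolution Set.univ f u)
    (hf : ContDiff ℝ 1 f) (hu : ContDiff ℝ 1 u) {ξ : Euc n → ℝ} (hξ : ContDiff ℝ 1 ξ)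
    (hc : HasCompactSupport ξ) :
    0 ≤ ∫ x, (⟪fderiv ℝ areaFlux (∇ u x) (∇ ξ x), ∇ ξ x⟫ - deriv f (u x) * ξ x ^ 2) := by
  have hDA : Continuous fun x => fderiv ℝ areaFlux (∇ u x) :=
    (contDiff_areaFlux (k := 1)).continuous_fderiv one_ne_zero |>.comp
      (contDiff_gradient (m := 0) hu (by simp)).continuous
  have hf' : Continuous fun x => deriv f (u x) := (hf.continuous_deriv le_rfl).comp hu.continuous
  let grad := (InnerProductSpace.toDual ℝ (Euc n)).symm
  refine integral_comp_fderiv_nonneg_of_forall_contDiff_infty (μ := volume)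
    (F := fun q => ⟪fderiv ℝ areaFlux (∇ u q.1) (grad q.2.2), grad q.2.2⟫
      - deriv f (u q.1) * q.2.1 ^ 2) ?_ (by simp) (fun ζ hζ hζc => ?_) hξ hc
  · have := hDA.comp (continuous_fst (X := Euc n) (Y := ℝ × (Euc n →L[ℝ] ℝ)))
    have := hf'.comp (continuous_fst (X := Euc n) (Y := ℝ × (Euc n →L[ℝ] ℝ)))
    have : Continuous grad := grad.continuous
    fun_prop
  · have hstab := h.2.2 ζ ⟨hζ, hζc, Set.subset_univ _⟩
    have hζ' : Continuous (∇ ζ) := (contDiff_gradient (m := 0) hζ (by simp)).continuous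
    simp only [Measure.restrict_univ, one_add_norm_sq_rpow_three_halves] at hstab
    change 0 ≤ ∫ x, (⟪fderiv ℝ areaFlux (∇ u x) (∇ ζ x), ∇ ζ x⟫ - deriv f (u x) * ζ x ^ 2)
    rw [integral_sub, sub_nonneg]
    · refine hstab.trans_eq ?_
      congr with x
      rw [inner_fderiv_areaFlux_apply, real_inner_self_eq_norm_sq, ← pow_two, areaDensity]
    · refine ((hDA.clm_apply hζ').inner hζ').integrable_of_hasCompactSupport
        ((hζc.fderiv ℝ).mono fun x hx hx0 => hx ?_)
      simp [gradient, hx0]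
    · exact (hf'.mul (hζ.continuous.pow 2)).integrable_of_hasCompactSupport
        (hζc.mono fun x hx hx0 => hx (by simp [hx0]))

end Solutions

section DilationInequality

variable {E : Type*} [NormedAddCommGroup E] [InnerProductSpace ℝ E]

/-- The integrand of the inequality obtained from stability with the test function `⟨∇u, x⟩ η`, in
dimension `d`: here `p = ∇u(x)`, `t = η(x)` and `v = ∇η(x)`. No second derivatives of `u` are left
in it. -/
def dilationDensity (d : ℝ) (p x : E) (t : ℝ) (v : E) : ℝ :=
  ⟪p, x⟫ ^ 2 * ⟪fderiv ℝ areaFlux p v, v⟫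
    + (2 + ‖p‖ ^ 2) / areaDensity p ^ 3 * (t ^ 2 * ‖p‖ ^ 2 + 2 * t * ⟪p, x⟫ * ⟪p, v⟫)
    - ‖p‖ ^ 2 / areaDensity p * (d * t ^ 2 + 2 * t * ⟪v, x⟫)

-- For `p = ∇u(x)` and `P = D²u(x) x`, the gradient of `⟪∇u, x⟫` is `P + p` and the derivative of
-- `areaFlux (∇u)` along dilations is `DA(p) P - A(p)`. Everything quadratic in `P` cancels.
lemma inner_fderiv_areaFlux_sub_inner (p x P v : E) (t : ℝ) :
    ⟪fderiv ℝ areaFlux p (⟪p, x⟫ • v + t • (P + p)), ⟪p, x⟫ • v + t • (P + p)⟫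
        - ⟪fderiv ℝ areaFlux p P - areaFlux p, t ^ 2 • (P + p) + (2 * t * ⟪p, x⟫) • v⟫ =
      ⟪p, x⟫ ^ 2 * ⟪fderiv ℝ areaFlux p v, v⟫
        + (2 + ‖p‖ ^ 2) / areaDensity p ^ 3 * (t ^ 2 * ‖p‖ ^ 2 + 2 * t * ⟪p, x⟫ * ⟪p, v⟫)
        + t ^ 2 * ((2 + ‖p‖ ^ 2) / areaDensity p ^ 3 * ⟪p, P⟫) := by
  have hflux : fderiv ℝ areaFlux p P - areaFlux p =
      fderiv ℝ areaFlux p (P + p) - ((2 + ‖p‖ ^ 2) / areaDensity p ^ 3) • p := by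
    rw [← fderiv_areaFlux_self_add, map_add]
    abel
  have hsymm : ⟪fderiv ℝ areaFlux p v, P + p⟫ = ⟪fderiv ℝ areaFlux p (P + p), v⟫ := by
    rw [inner_fderiv_areaFlux_apply_comm, real_inner_comm]
  have hp : ⟪p, P + p⟫ = ⟪p, P⟫ + ‖p‖ ^ 2 := by
    rw [inner_add_right, real_inner_self_eq_norm_sq]
  rw [hflux, map_add, map_smul, map_smul]
  generalize P + p = a at *
  simp only [inner_add_left, inner_add_right, inner_sub_left, real_inner_smul_left,
    real_inner_smul_right, hsymm, hp]
  ring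

variable [CompleteSpace E]

lemma hasCompactSupport_of_forall_gradient_eq_zero {η F : E → ℝ} (hc : HasCompactSupport η)
    (hF : ∀ x, η x = 0 → ∇ η x = 0 → F x = 0) : HasCompactSupport F := by
  refine hc.mono' fun x => not_imp_not.1 fun hx => ?_
  have hx' : fderiv ℝ η x = 0 :=
    image_eq_zero_of_notMem_tsupport fun h => hx (tsupport_fderiv_subset ℝ h)
  simpa using hF x (image_eq_zero_of_notMem_tsupport hx) (by simp [gradient, hx'])

lemma integrable_dilationDensity [MeasurableSpace E] [OpensMeasurableSpace E] {μ : Measure E}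
    [IsFiniteMeasureOnCompacts μ] (d : ℝ) {p : E → E} {η : E → ℝ} (hp : Continuous p)
    (hη : ContDiff ℝ 1 η) (hc : HasCompactSupport η) :
    Integrable (fun x => dilationDensity d (p x) x (η x) (∇ η x)) μ := by
  have hW : Continuous fun x => areaDensity (p x) :=
    (contDiff_areaDensity (k := 0)).continuous.comp hp
  have hW0 (x) : areaDensity (p x) ≠ 0 := (areaDensity_pos _).ne'
  have hDA : Continuous fun x => fderiv ℝ areaFlux (p x) :=
    ((contDiff_areaFlux (k := 1)).continuous_fderiv one_ne_zero).comp hp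
  have hη' : Continuous (∇ η) := (contDiff_gradient (m := 0) hη (by simp)).continuous
  have hηc : Continuous η := hη.continuous
  refine Continuous.integrable_of_hasCompactSupport ?_
    (hasCompactSupport_of_forall_gradient_eq_zero hc fun x h h' => by simp [dilationDensity, h, h'])
  unfold dilationDensity
  fun_prop (disch := simp [hW0])

end DilationInequality

section Stability

variable {n : ℕ} {f : ℝ → ℝ} {u η : Euc n → ℝ}

lemma IsStableSolution.integral_inner_sub_fderiv_dilationDeriv_nonneg
    (h : IsStableSolution Set.univ f u) (hf : ContDiff ℝ 1 f) (hu : ContDiff ℝ 3 u)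
    (hη : ContDiff ℝ 1 η) (hc : HasCompactSupport η) :
    0 ≤ ∫ x, (⟪fderiv ℝ areaFlux (∇ u x) (∇ (fun y => ⟪∇ u y, y⟫ * η y) x),
          ∇ (fun y => ⟪∇ u y, y⟫ * η y) x⟫
        - fderiv ℝ (fun y => η y ^ 2 * ⟪∇ u y, y⟫) x
            (dilationDeriv (fun y => areaFlux (∇ u y)) x)) := by
  set ξ : Euc n → ℝ := fun y => ⟪∇ u y, y⟫ * η y
  set ψ : Euc n → ℝ := fun y => η y ^ 2 * ⟪∇ u y, y⟫
  set V : Euc n → Euc n := fun y => areaFlux (∇ u y)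
  have hG : ContDiff ℝ 2 (∇ u) := contDiff_gradient hu le_rfl
  have hw : ContDiff ℝ 1 fun y => ⟪∇ u y, y⟫ := (hG.of_le one_le_two).inner ℝ contDiff_id
  have hξ : ContDiff ℝ 1 ξ := hw.mul hη
  have hψ : ContDiff ℝ 1 ψ := (hη.pow 2).mul hw
  have hξc : HasCompactSupport ξ := hc.mul_left
  have hψc : HasCompactSupport ψ := hc.mono fun x hx hx0 => hx (by simp [ψ, hx0])
  have hstab := h.integral_nonneg_of_contDiff_one hf (hu.of_le (by norm_num)) hξ hξc
  have hlin := h.1.integral_deriv_mul_inner_mul hf hu hψ hψc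
  have hfξ (x) : deriv f (u x) * ⟪∇ u x, x⟫ * ψ x = deriv f (u x) * ξ x ^ 2 := by ring
  have hξ' : Continuous (∇ ξ) := (contDiff_gradient (m := 0) hξ (by simp)).continuous
  have hQ : Integrable fun x => ⟪fderiv ℝ areaFlux (∇ u x) (∇ ξ x), ∇ ξ x⟫ :=
    ((((contDiff_areaFlux (k := 1)).continuous_fderiv one_ne_zero).comp hG.continuous).clm_apply
      hξ').inner hξ' |>.integrable_of_hasCompactSupport
        (hasCompactSupport_of_forall_gradient_eq_zero hξc fun x _ hx => by simp [hx])
  have hL : Integrable fun x => fderiv ℝ ψ x (dilationDeriv V x) :=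
    ((hψ.continuous_fderiv one_ne_zero).clm_apply (contDiff_dilationDeriv
      (contDiff_areaFlux.comp hG) (m := 1) le_rfl).continuous).integrable_of_hasCompactSupport
        ((hψc.fderiv ℝ).mono fun x hx hx0 => hx (by simp [hx0]))
  have hR : Integrable fun x => deriv f (u x) * ξ x ^ 2 :=
    (((hf.continuous_deriv le_rfl).comp hu.continuous).mul
      (hξ.continuous.pow 2)).integrable_of_hasCompactSupport
        (hξc.mono fun x hx hx0 => hx (by simp [hx0]))
  rw [integral_sub hQ hR] at hstab
  rwa [integral_sub hQ hL, ← hlin, integral_congr_ae (.of_forall hfξ)]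

lemma inner_sub_fderiv_dilationDeriv_eq {E : Type*} [NormedAddCommGroup E] [InnerProductSpace ℝ E]
    [CompleteSpace E] {u η : E → ℝ} (hu : ContDiff ℝ 2 u) (hη : Differentiable ℝ η) (d : ℝ)
    (x : E) :
    ⟪fderiv ℝ areaFlux (∇ u x) (∇ (fun y => ⟪∇ u y, y⟫ * η y) x), ∇ (fun y => ⟪∇ u y, y⟫ * η y) x⟫
        - fderiv ℝ (fun y => η y ^ 2 * ⟪∇ u y, y⟫) x
            (dilationDeriv (fun y => areaFlux (∇ u y)) x) =
      dilationDensity d (∇ u x) x (η x) (∇ η x)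
        + ‖∇ u x‖ ^ 2 / areaDensity (∇ u x) * (d * η x ^ 2 + fderiv ℝ (fun y => η y ^ 2) x x)
        + η x ^ 2 * fderiv ℝ (fun y => ‖∇ u y‖ ^ 2 / areaDensity (∇ u y)) x x := by
  have hG : DifferentiableAt ℝ (∇ u) x :=
    (contDiff_gradient (m := 1) hu le_rfl).differentiable one_ne_zero x
  have hw : DifferentiableAt ℝ (fun y => ⟪∇ u y, y⟫) x := hG.inner ℝ differentiableAt_fun_id
  have hη2 : ∇ (fun y => η y ^ 2) x = (2 * η x) • ∇ η x := by
    simp only [pow_two]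
    rw [gradient_fun_mul (hη x) (hη x), ← add_smul, two_mul]
  have hξ : ∇ (fun y => ⟪∇ u y, y⟫ * η y) x =
      ⟪∇ u x, x⟫ • ∇ η x + η x • (fderiv ℝ (∇ u) x x + ∇ u x) := by
    rw [gradient_fun_mul hw (hη x), gradient_inner_gradient_self hu]
  have hψ : ∇ (fun y => η y ^ 2 * ⟪∇ u y, y⟫) x =
      η x ^ 2 • (fderiv ℝ (∇ u) x x + ∇ u x) + (2 * η x * ⟪∇ u x, x⟫) • ∇ η x := by
    rw [gradient_fun_mul ((hη x).fun_pow 2) hw, gradient_inner_gradient_self hu, hη2, smul_smul,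
      mul_comm (2 * η x)]
  have hdil : dilationDeriv (fun y => areaFlux (∇ u y)) x =
      fderiv ℝ areaFlux (∇ u x) (fderiv ℝ (∇ u) x x) - areaFlux (∇ u x) := by
    rw [dilationDeriv, fderiv_fun_comp x (contDiff_areaFlux.differentiable one_ne_zero _) hG]
    rfl
  have hH : fderiv ℝ (fun y => ‖∇ u y‖ ^ 2 / areaDensity (∇ u y)) x x =
      (2 + ‖∇ u x‖ ^ 2) / areaDensity (∇ u x) ^ 3 * ⟪∇ u x, fderiv ℝ (∇ u) x x⟫ := by
    have hcomp := (hasFDerivAt_norm_sq_div_areaDensity (∇ u x)).comp x hG.hasFDerivAt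
    rw [show fderiv ℝ (fun y => ‖∇ u y‖ ^ 2 / areaDensity (∇ u y)) x = _ from hcomp.fderiv]
    rfl
  rw [← inner_gradient_left (f := fun y => η y ^ 2 * ⟪∇ u y, y⟫),
    ← inner_gradient_left (f := fun y => η y ^ 2), hξ, hψ, hη2, hdil, hH,
    real_inner_comm (fderiv ℝ areaFlux _ _ - _), inner_fderiv_areaFlux_sub_inner,
    real_inner_smul_left, dilationDensity]
  ring

lemma IsStableSolution.integral_dilationDensity_nonneg (h : IsStableSolution Set.univ f u)
    (hf : ContDiff ℝ 1 f) (hu : ContDiff ℝ 3 u) (hη : ContDiff ℝ 1 η)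
    (hc : HasCompactSupport η) :
    0 ≤ ∫ x, dilationDensity n (∇ u x) x (η x) (∇ η x) := by
  have hG : ContDiff ℝ 2 (∇ u) := contDiff_gradient hu le_rfl
  have hH : ContDiff ℝ 1 fun x => ‖∇ u x‖ ^ 2 / areaDensity (∇ u x) :=
    ((hG.norm_sq ℝ).div (contDiff_areaDensity.comp hG) fun x => (areaDensity_pos _).ne').of_le
      one_le_two
  have hη2 : ContDiff ℝ 1 fun x => η x ^ 2 := hη.pow 2
  have hη2c : HasCompactSupport fun x => η x ^ 2 := hc.mono fun x hx hx0 => hx (by simp [hx0])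
  have hnonneg := h.integral_inner_sub_fderiv_dilationDeriv_nonneg hf hu hη hc
  simp only [inner_sub_fderiv_dilationDeriv_eq (hu.of_le (by norm_num))
    (hη.differentiable one_ne_zero) n] at hnonneg
  have hibp := integral_mul_fderiv_self (μ := volume) hH hη2 hη2c
  rw [finrank_euclideanSpace_fin] at hibp
  have hd : Integrable fun x => dilationDensity n (∇ u x) x (η x) (∇ η x) :=
    integrable_dilationDensity n hG.continuous hη hc
  have hr : Integrable fun x => ‖∇ u x‖ ^ 2 / areaDensity (∇ u x)
      * (n * η x ^ 2 + fderiv ℝ (fun y => η y ^ 2) x x) :=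
    (hH.continuous.mul ((continuous_const.mul hη2.continuous).add
      ((hη2.continuous_fderiv one_ne_zero).clm_apply continuous_id)))
      |>.integrable_of_hasCompactSupport (hasCompactSupport_of_forall_gradient_eq_zero hη2c
        fun x h0 h1 => by simp [h0, ← inner_gradient_left, h1])
  have hl : Integrable fun x => η x ^ 2 *
      fderiv ℝ (fun y => ‖∇ u y‖ ^ 2 / areaDensity (∇ u y)) x x :=
    (hη2.continuous.mul ((hH.continuous_fderiv one_ne_zero).clm_apply continuous_id))
      |>.integrable_of_hasCompactSupport hη2c.mul_right
  rwa [integral_add (hd.fun_add hr) hl, integral_add hd hr, hibp, add_neg_cancel_right] at hnonneg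

end Stability

section PointwiseBounds

/-- The quadratic form governing the dilation inequality for `η = |x|⁻ᵃ` in dimension `d`, where
`z = |∇u|²` and `s` is the square of the radial derivative of `u`. -/
def exponentForm (d a z s : ℝ) : ℝ :=
  a ^ 2 * s * (1 + z - s) - 2 * a * s * (2 + z) + z * (2 + z) - (d - 2 * a) * z * (1 + z)

variable {d a z s : ℝ}

lemma exponentForm_eq (d a z s : ℝ) :
    exponentForm d a z s =
      -(1 + z) * ((d - 2 - 2 * a) * (z - s) + (d - 2 + 2 * a - a ^ 2) * s) - (z - a * s) ^ 2 := by
  rw [exponentForm]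
  ring

lemma exponentForm_nonpos (ha : 2 * a ≤ d - 2) (ha' : a ^ 2 - 2 * a ≤ d - 2) (hs : 0 ≤ s)
    (hsz : s ≤ z) : exponentForm d a z s ≤ 0 := by
  have hz : 0 ≤ 1 + z := by linarith
  have h₁ : 0 ≤ (d - 2 - 2 * a) * (z - s) := mul_nonneg (by linarith) (by linarith)
  have h₂ : 0 ≤ (d - 2 + 2 * a - a ^ 2) * s := mul_nonneg (by linarith) hs
  rw [exponentForm_eq]
  nlinarith [mul_nonneg hz (add_nonneg h₁ h₂), sq_nonneg (z - a * s)]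

-- The form is convex in the exponent, and equals `-(d - 2) z (1 + z) - z²` at exponent zero.
lemma exponentForm_mul_le (hd : 2 ≤ d) (ha : 2 * a ≤ d - 2) (ha' : a ^ 2 - 2 * a ≤ d - 2)
    (hs : 0 ≤ s) (hsz : s ≤ z) {l : ℝ} (hl₀ : 0 ≤ l) (hl₁ : l ≤ 1) :
    exponentForm d (l * a) z s ≤ -(1 - l) * z ^ 2 := by
  have hzero : exponentForm d 0 z s ≤ -z ^ 2 := by
    rw [exponentForm]
    nlinarith [mul_nonneg (sub_nonneg.2 hd) (mul_nonneg (hs.trans hsz) (by linarith : 0 ≤ 1 + z))]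
  have hconvex : exponentForm d (l * a) z s =
      l * exponentForm d a z s + (1 - l) * exponentForm d 0 z s
        - l * (1 - l) * (a ^ 2 * s * (1 + z - s)) := by
    simp only [exponentForm]
    ring
  have hdefect : 0 ≤ l * (1 - l) * (a ^ 2 * s * (1 + z - s)) := by
    have : 0 ≤ 1 - l := by linarith
    have : 0 ≤ 1 + z - s := by linarith
    positivity
  have ha0 := mul_nonpos_of_nonneg_of_nonpos hl₀ (exponentForm_nonpos ha ha' hs hsz)
  have h0 := mul_le_mul_of_nonneg_left hzero (sub_nonneg.2 hl₁)
  linarith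

variable {E : Type*} [NormedAddCommGroup E] [InnerProductSpace ℝ E]

lemma dilationDensity_smul_self (d : ℝ) (p : E) {x : E} {b t q : ℝ} (hq : q * ‖x‖ ^ 2 = -(b * t)) :
    dilationDensity d p x t (q • x) =
      t ^ 2 * exponentForm d b (‖p‖ ^ 2) (⟪p, x⟫ ^ 2 / ‖x‖ ^ 2) / areaDensity p ^ 3 := by
  set s := ⟪p, x⟫ ^ 2 / ‖x‖ ^ 2
  have hs : ⟪p, x⟫ ^ 2 = ‖x‖ ^ 2 * s := by
    rcases eq_or_ne x 0 with rfl | hx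
    · simp
    · exact (mul_div_cancel₀ _ (by positivity)).symm
  have hW := areaDensity_pos p
  have hexpand : dilationDensity d p x t (q • x) =
      (q ^ 2 * ⟪p, x⟫ ^ 2 * (‖x‖ ^ 2 * areaDensity p ^ 2 - ⟪p, x⟫ ^ 2)
        + (2 + ‖p‖ ^ 2) * (t ^ 2 * ‖p‖ ^ 2 + 2 * t * q * ⟪p, x⟫ ^ 2)
        - ‖p‖ ^ 2 * areaDensity p ^ 2 * (d * t ^ 2 + 2 * t * q * ‖x‖ ^ 2)) / areaDensity p ^ 3 := by
    simp only [dilationDensity, inner_fderiv_areaFlux_apply, real_inner_smul_left,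
      real_inner_smul_right, real_inner_self_eq_norm_sq]
    field
  rw [hexpand, hs, areaDensity_sq, exponentForm]
  congr 1
  linear_combination ((q * ‖x‖ ^ 2 - b * t) * s * (1 + ‖p‖ ^ 2 - s)
    + 2 * t * s * (2 + ‖p‖ ^ 2) - 2 * t * ‖p‖ ^ 2 * (1 + ‖p‖ ^ 2)) * hq

lemma dilationDensity_smul_self_le (hd : 2 ≤ d) (ha : 2 * a ≤ d - 2) (ha' : a ^ 2 - 2 * a ≤ d - 2)
    (p : E) {x : E} {l t q : ℝ} (hl₀ : 0 ≤ l) (hl₁ : l ≤ 1) (hq : q * ‖x‖ ^ 2 = -(l * a * t)) :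
    dilationDensity d p x t (q • x) ≤
      -((1 - l) * t ^ 2 * ((‖p‖ ^ 2) ^ 2 / areaDensity p ^ 3)) := by
  have hsz : ⟪p, x⟫ ^ 2 / ‖x‖ ^ 2 ≤ ‖p‖ ^ 2 := by
    refine div_le_of_le_mul₀ (by positivity) (by positivity) ?_
    rw [← mul_pow, ← sq_abs]
    gcongr
    exact abs_real_inner_le_norm p x
  have hW := areaDensity_pos p
  rw [dilationDensity_smul_self d p hq]
  calc _ ≤ t ^ 2 * (-(1 - l) * (‖p‖ ^ 2) ^ 2) / areaDensity p ^ 3 := by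
        gcongr
        exact exponentForm_mul_le hd ha ha' (by positivity) hsz hl₀ hl₁
    _ = _ := by ring

lemma inner_fderiv_areaFlux_self_le (p v : E) : ⟪fderiv ℝ areaFlux p v, v⟫ ≤ ‖v‖ ^ 2 := by
  have hW := areaDensity_pos p
  rw [inner_fderiv_areaFlux_apply, real_inner_self_eq_norm_sq, ← pow_two]
  exact (sub_le_self _ (by positivity)).trans
    (div_le_self (by positivity) (one_le_areaDensity p))

lemma dilationDensity_le (hd : 2 ≤ d) (p x v : E) (t : ℝ) :
    dilationDensity d p x t v ≤ ‖p‖ ^ 2 * ((‖x‖ * ‖v‖) ^ 2 + 6 * (|t| * (‖x‖ * ‖v‖))) := by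
  have hW := areaDensity_pos p
  have hWsq := areaDensity_sq p
  have hpx := abs_real_inner_le_norm p x
  have hflux : ⟪p, x⟫ ^ 2 * ⟪fderiv ℝ areaFlux p v, v⟫ ≤ (‖p‖ * ‖x‖) ^ 2 * ‖v‖ ^ 2 :=
    (mul_le_mul_of_nonneg_left (inner_fderiv_areaFlux_self_le p v) (sq_nonneg _)).trans
      (mul_le_mul_of_nonneg_right (sq_le_sq.2 (hpx.trans (le_abs_self _))) (sq_nonneg _))
  have hcoeff : (2 + ‖p‖ ^ 2) / areaDensity p ^ 3 ≤ 2 := by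
    rw [div_le_iff₀ (by positivity)]
    linarith [pow_le_pow_right₀ (one_le_areaDensity p) (Nat.le_succ 2), sq_nonneg ‖p‖]
  have hcross : (2 + ‖p‖ ^ 2) / areaDensity p ^ 3 * (2 * t * ⟪p, x⟫ * ⟪p, v⟫) ≤
      2 * (2 * |t| * (‖p‖ * ‖x‖) * (‖p‖ * ‖v‖)) := by
    refine (le_abs_self _).trans ?_
    rw [abs_mul, abs_mul, abs_mul, abs_mul, abs_two, abs_of_pos (by positivity)]
    gcongr
    exact abs_real_inner_le_norm p v
  have hdiv : -(‖p‖ ^ 2 / areaDensity p * (2 * t * ⟪v, x⟫)) ≤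
      ‖p‖ ^ 2 * (2 * |t| * (‖v‖ * ‖x‖)) := by
    refine (neg_le_abs _).trans ?_
    rw [abs_mul, abs_mul, abs_mul, abs_two, abs_of_nonneg (by positivity)]
    gcongr
    · exact div_le_self (by positivity) (one_le_areaDensity p)
    · exact abs_real_inner_le_norm v x
  have hdim : (2 + ‖p‖ ^ 2) / areaDensity p ^ 3 * (t ^ 2 * ‖p‖ ^ 2) ≤
      ‖p‖ ^ 2 / areaDensity p * (d * t ^ 2) := by
    rw [div_mul_eq_mul_div, div_mul_eq_mul_div, div_le_div_iff₀ (by positivity) hW]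
    have : 2 + ‖p‖ ^ 2 ≤ areaDensity p ^ 2 * d := by
      rw [hWsq]
      nlinarith [sq_nonneg ‖p‖]
    calc _ = (2 + ‖p‖ ^ 2) * (t ^ 2 * ‖p‖ ^ 2 * areaDensity p) := by ring
      _ ≤ areaDensity p ^ 2 * d * (t ^ 2 * ‖p‖ ^ 2 * areaDensity p) := by gcongr
      _ = _ := by ring
  rw [dilationDensity]
  linarith

end PointwiseBounds

section RadialWeight

lemma deriv_smoothTransition_of_nonpos {s : ℝ} (hs : s ≤ 0) : deriv smoothTransition s = 0 :=
  IsLocalMin.deriv_eq_zero (.of_forall fun y => by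
    rw [smoothTransition.zero_of_nonpos hs]; exact smoothTransition.nonneg y)

lemma deriv_smoothTransition_of_one_le {s : ℝ} (hs : 1 ≤ s) : deriv smoothTransition s = 0 :=
  IsLocalMax.deriv_eq_zero (.of_forall fun y => by
    rw [smoothTransition.one_of_one_le hs]; exact smoothTransition.le_one y)

lemma exists_forall_abs_deriv_smoothTransition_le :
    ∃ K > 0, ∀ s, |deriv smoothTransition s| ≤ K := by
  obtain ⟨K, hK⟩ := (isCompact_Icc (a := (0 : ℝ)) (b := 1)).exists_bound_of_continuousOn
    ((smoothTransition.contDiff (n := 1)).continuous_deriv le_rfl).continuousOn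
  refine ⟨|K| + 1, by positivity, fun s => ?_⟩
  rcases le_total s 0 with hs₀ | hs₀
  · rw [deriv_smoothTransition_of_nonpos hs₀, abs_zero]
    positivity
  rcases le_total 1 s with hs₁ | hs₁
  · rw [deriv_smoothTransition_of_one_le hs₁, abs_zero]
    positivity
  · exact (hK s ⟨hs₀, hs₁⟩).trans ((le_abs_self K).trans (le_add_of_nonneg_right zero_le_one))

/-- The test function `η` of the main estimate as a function of `t = |x|²`: the power `|x|⁻ᵃ`,
regularised at scale `ρ` and cut off between `|x| = R` and `|x| = 2R`. -/
def radialWeight (a ρ R t : ℝ) : ℝ :=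
  (ρ ^ 2 + t) ^ (-a / 2) * smoothTransition ((4 - t / R ^ 2) / 3)

variable {a ρ R t : ℝ}

lemma hasDerivAt_radialWeight (hρ : 0 < ρ) (ht : 0 ≤ t) :
    HasDerivAt (radialWeight a ρ R)
      (-a / 2 * (ρ ^ 2 + t) ^ (-a / 2 - 1) * smoothTransition ((4 - t / R ^ 2) / 3)
        - (ρ ^ 2 + t) ^ (-a / 2) *
          (deriv smoothTransition ((4 - t / R ^ 2) / 3) / (3 * R ^ 2))) t := by
  have hpow : HasDerivAt (fun t : ℝ => (ρ ^ 2 + t) ^ (-a / 2)) _ t :=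
    ((hasDerivAt_id t).const_add (ρ ^ 2)).rpow_const (Or.inl (by positivity))
  have hcut : HasDerivAt (fun t : ℝ => smoothTransition ((4 - t / R ^ 2) / 3)) _ t :=
    ((smoothTransition.contDiff (n := 1)).differentiable one_ne_zero _).hasDerivAt.comp t
      ((((hasDerivAt_id t).div_const (R ^ 2)).const_sub 4).div_const 3)
  refine (hpow.mul hcut).congr_deriv ?_
  simp only [id_eq]
  field

lemma contDiff_radialWeight_norm_sq {E : Type*} [NormedAddCommGroup E] [InnerProductSpace ℝ E]
    {k : ℕ∞} (hρ : 0 < ρ) : ContDiff ℝ k fun x : E => radialWeight a ρ R (‖x‖ ^ 2) := by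
  have hsq : ContDiff ℝ k fun x : E => ‖x‖ ^ 2 := contDiff_norm_sq ℝ
  exact ((contDiff_const.add hsq).rpow_const_of_ne fun x => by positivity).mul
    (smoothTransition.contDiff.comp ((contDiff_const.sub (hsq.div_const _)).div_const _))

lemma radialWeight_of_le (hR : 0 < R) (ht : t ≤ R ^ 2) :
    radialWeight a ρ R t = (ρ ^ 2 + t) ^ (-a / 2) := by
  have : t / R ^ 2 ≤ 1 := div_le_one_of_le₀ ht (by positivity)
  rw [radialWeight, smoothTransition.one_of_one_le (by linarith), mul_one]

lemma deriv_radialWeight_mul_self_of_le (hρ : 0 < ρ) (hR : 0 < R) (ht : 0 ≤ t) (htR : t ≤ R ^ 2) :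
    2 * deriv (radialWeight a ρ R) t * t = -(t / (ρ ^ 2 + t) * a * radialWeight a ρ R t) := by
  have hcut : 1 ≤ (4 - t / R ^ 2) / 3 := by
    have : t / R ^ 2 ≤ 1 := div_le_one_of_le₀ htR (by positivity)
    linarith
  have hpos : 0 < ρ ^ 2 + t := by positivity
  rw [(hasDerivAt_radialWeight hρ ht).deriv, radialWeight_of_le hR htR,
    smoothTransition.one_of_one_le hcut, deriv_smoothTransition_of_one_le hcut,
    rpow_sub_one hpos.ne']
  field

lemma radialWeight_of_four_mul_sq_le (hR : 0 < R) (ht : 4 * R ^ 2 ≤ t) :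
    radialWeight a ρ R t = 0 := by
  have : 4 ≤ t / R ^ 2 := (le_div_iff₀ (by positivity)).2 ht
  rw [radialWeight, smoothTransition.zero_of_nonpos (by linarith), mul_zero]

lemma deriv_radialWeight_of_four_mul_sq_le (hρ : 0 < ρ) (hR : 0 < R) (ht : 4 * R ^ 2 ≤ t) :
    deriv (radialWeight a ρ R) t = 0 := by
  have hcut : (4 - t / R ^ 2) / 3 ≤ 0 := by
    have : 4 ≤ t / R ^ 2 := (le_div_iff₀ (by positivity)).2 ht
    linarith
  rw [(hasDerivAt_radialWeight hρ ((by positivity : 0 ≤ 4 * R ^ 2).trans ht)).deriv,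
    smoothTransition.zero_of_nonpos hcut, deriv_smoothTransition_of_nonpos hcut]
  simp

lemma rpow_neg_half_le_of_sq_le (ha : 0 ≤ a) (hR : 0 < R) (ht : R ^ 2 ≤ t) :
    (ρ ^ 2 + t) ^ (-a / 2) ≤ (R ^ 2) ^ (-a / 2) :=
  rpow_le_rpow_of_nonpos (by positivity) (by nlinarith [sq_nonneg ρ]) (by linarith)

lemma abs_radialWeight_le (ha : 0 ≤ a) (hR : 0 < R) (ht : R ^ 2 ≤ t) :
    |radialWeight a ρ R t| ≤ (R ^ 2) ^ (-a / 2) := by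
  have ht₀ : 0 ≤ t := (sq_nonneg R).trans ht
  have hcut := smoothTransition.nonneg ((4 - t / R ^ 2) / 3)
  rw [radialWeight, abs_of_nonneg (by positivity)]
  exact (mul_le_of_le_one_right (by positivity) (smoothTransition.le_one _)).trans
    (rpow_neg_half_le_of_sq_le ha hR ht)

lemma exists_abs_deriv_radialWeight_mul_le (ha : 0 ≤ a) :
    ∃ M > 0, ∀ ρ R t : ℝ, 0 < ρ → 0 < R → R ^ 2 ≤ t → t ≤ 4 * R ^ 2 →
      |2 * deriv (radialWeight a ρ R) t| * t ≤ M * (R ^ 2) ^ (-a / 2) := by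
  obtain ⟨K, hK₀, hK⟩ := exists_forall_abs_deriv_smoothTransition_le
  refine ⟨a + 3 * K, by positivity, fun ρ R t hρ hR hRt htR => ?_⟩
  have ht : 0 < t := (sq_pos_of_pos hR).trans_le hRt
  have hpos : 0 < ρ ^ 2 + t := by positivity
  set A := (R ^ 2) ^ (-a / 2)
  have hA : (ρ ^ 2 + t) ^ (-a / 2) ≤ A := rpow_neg_half_le_of_sq_le ha hR hRt
  set σ := (4 - t / R ^ 2) / 3
  have hσ := smoothTransition.nonneg σ
  have hpow : a * (t / (ρ ^ 2 + t)) * ((ρ ^ 2 + t) ^ (-a / 2) * smoothTransition σ) ≤ a * A := by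
    have h₁ : t / (ρ ^ 2 + t) ≤ 1 := div_le_one_of_le₀ (by nlinarith [sq_nonneg ρ]) hpos.le
    have h₂ := smoothTransition.le_one σ
    calc _ ≤ a * 1 * (A * 1) := by gcongr
      _ = a * A := by ring
  have hcut : 2 * (t / (3 * R ^ 2)) * ((ρ ^ 2 + t) ^ (-a / 2) * |deriv smoothTransition σ|) ≤
      3 * K * A := by
    have h₁ : t / (3 * R ^ 2) ≤ 4 / 3 := by
      rw [div_le_div_iff₀ (by positivity) (by norm_num)]
      linarith
    calc _ ≤ 2 * (4 / 3) * (A * K) := by gcongr; exact hK σ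
      _ ≤ 3 * K * A := by nlinarith [mul_nonneg (rpow_nonneg (sq_nonneg R) (-a / 2)) hK₀.le]
  calc |2 * deriv (radialWeight a ρ R) t| * t = |2 * deriv (radialWeight a ρ R) t * t| := by
        rw [abs_mul _ t, abs_of_pos ht]
    _ = |-(a * (t / (ρ ^ 2 + t)) * ((ρ ^ 2 + t) ^ (-a / 2) * smoothTransition σ))
        - 2 * (t / (3 * R ^ 2)) * ((ρ ^ 2 + t) ^ (-a / 2) * deriv smoothTransition σ)| := by
        rw [(hasDerivAt_radialWeight hρ ht.le).deriv, rpow_sub_one hpos.ne']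
        congr 1
        field
    _ ≤ _ := by
        refine (abs_sub _ _).trans ?_
        rw [abs_neg, abs_of_nonneg (by positivity), abs_mul, abs_mul _ (deriv _ _),
          abs_of_nonneg (by positivity), abs_of_nonneg (by positivity)]
        linarith

end RadialWeight

section RadialTestFunction

variable {E : Type*} [NormedAddCommGroup E] [InnerProductSpace ℝ E] {a d ρ R : ℝ}

lemma gradient_radialWeight_norm_sq [CompleteSpace E] (hρ : 0 < ρ) (x : E) :
    ∇ (fun y => radialWeight a ρ R (‖y‖ ^ 2)) x =
      (2 * deriv (radialWeight a ρ R) (‖x‖ ^ 2)) • x :=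
  gradient_comp_norm_sq (hasDerivAt_radialWeight hρ (sq_nonneg ‖x‖)).differentiableAt

lemma hasCompactSupport_radialWeight_norm_sq {E : Type*} [NormedAddCommGroup E] [ProperSpace E]
    (hR : 0 < R) :
    HasCompactSupport fun x : E => radialWeight a ρ R (‖x‖ ^ 2) := by
  refine .of_support_subset_isCompact (isCompact_closedBall 0 (2 * R)) fun x hx => ?_
  contrapose! hx
  rw [mem_closedBall_zero_iff, not_le] at hx
  exact Function.notMem_support.2 (radialWeight_of_four_mul_sq_le hR (by nlinarith))

lemma dilationDensity_radialWeight_le_of_norm_le (hd : 2 ≤ d) (ha : 2 * a ≤ d - 2)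
    (ha' : a ^ 2 - 2 * a ≤ d - 2) (hρ : 0 < ρ) (hR : 0 < R) (p : E) {x : E} (hx : ‖x‖ ≤ R) :
    dilationDensity d p x (radialWeight a ρ R (‖x‖ ^ 2))
        ((2 * deriv (radialWeight a ρ R) (‖x‖ ^ 2)) • x) ≤
      -((1 - ‖x‖ ^ 2 / (ρ ^ 2 + ‖x‖ ^ 2)) * (ρ ^ 2 + ‖x‖ ^ 2) ^ (-a) *
        ((‖p‖ ^ 2) ^ 2 / areaDensity p ^ 3)) := by
  have hxR : ‖x‖ ^ 2 ≤ R ^ 2 := by gcongr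
  have hsq : radialWeight a ρ R (‖x‖ ^ 2) ^ 2 = (ρ ^ 2 + ‖x‖ ^ 2) ^ (-a) := by
    rw [radialWeight_of_le hR hxR, ← rpow_mul_natCast (by positivity)]
    congr 1
    push_cast
    ring
  rw [← hsq]
  exact dilationDensity_smul_self_le hd ha ha' p (by positivity)
    (div_le_one_of_le₀ (by nlinarith [sq_nonneg ρ]) (by positivity))
    (deriv_radialWeight_mul_self_of_le hρ hR (sq_nonneg _) hxR)

lemma dilationDensity_radialWeight_nonpos (hd : 2 ≤ d) (ha : 2 * a ≤ d - 2)
    (ha' : a ^ 2 - 2 * a ≤ d - 2) (hρ : 0 < ρ) (hR : 0 < R) (p : E) {x : E} (hx : ‖x‖ ≤ R) :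
    dilationDensity d p x (radialWeight a ρ R (‖x‖ ^ 2))
      ((2 * deriv (radialWeight a ρ R) (‖x‖ ^ 2)) • x) ≤ 0 := by
  have hW := areaDensity_pos p
  have hl : ‖x‖ ^ 2 / (ρ ^ 2 + ‖x‖ ^ 2) ≤ 1 :=
    div_le_one_of_le₀ (by nlinarith [sq_nonneg ρ]) (by positivity)
  refine (dilationDensity_radialWeight_le_of_norm_le hd ha ha' hρ hR p hx).trans ?_
  exact neg_nonpos.2 (mul_nonneg (mul_nonneg (sub_nonneg.2 hl) (by positivity)) (by positivity))

lemma dilationDensity_radialWeight_le_of_norm_le_scale (hd : 2 ≤ d) (ha₀ : 0 ≤ a)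
    (ha : 2 * a ≤ d - 2) (ha' : a ^ 2 - 2 * a ≤ d - 2) (hρ : 0 < ρ) (hρR : ρ ≤ R) (p : E) {x : E}
    (hx : ‖x‖ ≤ ρ) :
    dilationDensity d p x (radialWeight a ρ R (‖x‖ ^ 2))
        ((2 * deriv (radialWeight a ρ R) (‖x‖ ^ 2)) • x) ≤
      -((2 * ρ ^ 2) ^ (-a) / 2 * ((‖p‖ ^ 2) ^ 2 / areaDensity p ^ 3)) := by
  have hW := areaDensity_pos p
  have hxρ : ‖x‖ ^ 2 ≤ ρ ^ 2 := by gcongr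
  have hl : ‖x‖ ^ 2 / (ρ ^ 2 + ‖x‖ ^ 2) ≤ 1 / 2 := by
    rw [div_le_div_iff₀ (by positivity) two_pos]
    linarith
  have hpow : (2 * ρ ^ 2) ^ (-a) ≤ (ρ ^ 2 + ‖x‖ ^ 2) ^ (-a) :=
    rpow_le_rpow_of_nonpos (by positivity) (by linarith) (by linarith)
  refine (dilationDensity_radialWeight_le_of_norm_le hd ha ha' hρ (hρ.trans_le hρR) p
    (hx.trans hρR)).trans (neg_le_neg (mul_le_mul_of_nonneg_right ?_ (by positivity)))
  calc (2 * ρ ^ 2) ^ (-a) / 2 = 1 / 2 * (2 * ρ ^ 2) ^ (-a) := by ring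
    _ ≤ (1 - ‖x‖ ^ 2 / (ρ ^ 2 + ‖x‖ ^ 2)) * (ρ ^ 2 + ‖x‖ ^ 2) ^ (-a) :=
      mul_le_mul (by linarith) hpow (by positivity) (by linarith)

lemma exists_dilationDensity_radialWeight_le (hd : 2 ≤ d) (ha₀ : 0 ≤ a) :
    ∃ M > 0, ∀ (ρ R : ℝ) (p x : E), 0 < ρ → 0 < R → R ≤ ‖x‖ → ‖x‖ ≤ 2 * R →
      dilationDensity d p x (radialWeight a ρ R (‖x‖ ^ 2))
        ((2 * deriv (radialWeight a ρ R) (‖x‖ ^ 2)) • x) ≤ M * (R ^ 2) ^ (-a) * ‖p‖ ^ 2 := by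
  obtain ⟨M, hM₀, hM⟩ := exists_abs_deriv_radialWeight_mul_le ha₀
  refine ⟨M ^ 2 + 6 * M, by positivity, fun ρ R p x hρ hR hRx hxR => ?_⟩
  set η := radialWeight a ρ R (‖x‖ ^ 2)
  set q := 2 * deriv (radialWeight a ρ R) (‖x‖ ^ 2)
  set A := (R ^ 2) ^ (-a / 2)
  have hRx' : R ^ 2 ≤ ‖x‖ ^ 2 := by gcongr
  have hη : |η| ≤ A := abs_radialWeight_le ha₀ hR hRx'
  have hv : ‖x‖ * ‖q • x‖ ≤ M * A := calc
    ‖x‖ * ‖q • x‖ = |q| * ‖x‖ ^ 2 := by rw [norm_smul, norm_eq_abs]; ring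
    _ ≤ M * A := hM ρ R _ hρ hR hRx' (by nlinarith)
  have hA : A ^ 2 = (R ^ 2) ^ (-a) := by
    rw [← rpow_mul_natCast (by positivity)]
    congr 1
    push_cast
    ring
  calc dilationDensity d p x η (q • x)
      ≤ ‖p‖ ^ 2 * ((‖x‖ * ‖q • x‖) ^ 2 + 6 * (|η| * (‖x‖ * ‖q • x‖))) :=
        dilationDensity_le hd p x _ η
    _ ≤ ‖p‖ ^ 2 * ((M * A) ^ 2 + 6 * (A * (M * A))) := by gcongr
    _ = (M ^ 2 + 6 * M) * (R ^ 2) ^ (-a) * ‖p‖ ^ 2 := by rw [← hA]; ring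

lemma exists_dilationDensity_radialWeight_le_indicator (hd : 2 ≤ d) (ha₀ : 0 ≤ a)
    (ha : 2 * a ≤ d - 2) (ha' : a ^ 2 - 2 * a ≤ d - 2) :
    ∃ M > 0, ∀ (ρ R : ℝ) (p : E → E) (x : E), 0 < ρ → ρ < R →
      dilationDensity d (p x) x (radialWeight a ρ R (‖x‖ ^ 2))
          ((2 * deriv (radialWeight a ρ R) (‖x‖ ^ 2)) • x) ≤
        M * (R ^ 2) ^ (-a) * (ball 0 (2 * R) \ ball 0 R).indicator (fun y => ‖p y‖ ^ 2) x
          - (2 * ρ ^ 2) ^ (-a) / 2 *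
            (ball 0 ρ).indicator (fun y => (‖p y‖ ^ 2) ^ 2 / areaDensity (p y) ^ 3) x := by
  obtain ⟨M, hM₀, hM⟩ := exists_dilationDensity_radialWeight_le (E := E) hd ha₀
  refine ⟨M, hM₀, fun ρ R p x hρ hρR => ?_⟩
  have hR := hρ.trans hρR
  simp only [Set.indicator, Set.mem_sdiff, mem_ball_zero_iff]
  rcases lt_or_ge ‖x‖ R with hxR | hxR
  · rcases lt_or_ge ‖x‖ ρ with hxρ | hxρ
    · simpa [hxR, hxρ] using
        dilationDensity_radialWeight_le_of_norm_le_scale hd ha₀ ha ha' hρ hρR.le (p x) hxρ.le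
    · simpa [hxR, hxρ.not_gt] using
        dilationDensity_radialWeight_nonpos hd ha ha' hρ hR (p x) hxR.le
  have hxρ : ¬‖x‖ < ρ := (hρR.le.trans hxR).not_gt
  rcases lt_or_ge ‖x‖ (2 * R) with hx2R | hx2R
  · simpa [hxR.not_gt, hxρ, hx2R] using hM ρ R (p x) x hρ hR hxR hx2R.le
  · have ht : 4 * R ^ 2 ≤ ‖x‖ ^ 2 := by nlinarith
    simp [hxρ, hx2R.not_gt, dilationDensity, radialWeight_of_four_mul_sq_le hR ht,
      deriv_radialWeight_of_four_mul_sq_le hρ hR ht]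

end RadialTestFunction

section MainEstimate

lemma integrable_indicator_of_continuous_of_isBounded {X : Type*} [MetricSpace X]
    [ProperSpace X] [MeasurableSpace X] [OpensMeasurableSpace X] {μ : Measure X}
    [IsFiniteMeasureOnCompacts μ] {g : X → ℝ} {s : Set X} (hg : Continuous g)
    (hs : IsBounded s) (hsm : MeasurableSet s) : Integrable (s.indicator g) μ := by
  rw [integrable_indicator_iff hsm]
  exact (hg.continuousOn.integrableOn_compact hs.isCompact_closure).mono_set subset_closure

lemma exists_integral_ball_le_of_isStableSolution {n : ℕ} {a : ℝ} (ha₀ : 0 ≤ a)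
    (ha : 2 * a ≤ n - 2) (ha' : a ^ 2 - 2 * a ≤ n - 2) :
    ∃ M > 0, ∀ (f : ℝ → ℝ) (u : Euc n → ℝ), ContDiff ℝ 1 f → ContDiff ℝ 3 u →
      IsStableSolution Set.univ f u → ∀ ρ R : ℝ, 0 < ρ → ρ < R →
        (2 * ρ ^ 2) ^ (-a) / 2 * ∫ x in ball 0 ρ, (‖∇ u x‖ ^ 2) ^ 2 / areaDensity (∇ u x) ^ 3 ≤
          M * (R ^ 2) ^ (-a) * ∫ x in ball 0 (2 * R) \ ball 0 R, ‖∇ u x‖ ^ 2 := by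
  have hd : (2 : ℝ) ≤ n := by linarith
  obtain ⟨M, hM₀, hM⟩ := exists_dilationDensity_radialWeight_le_indicator (E := Euc n) hd ha₀ ha ha'
  refine ⟨M, hM₀, fun f u hf hu h ρ R hρ hρR => ?_⟩
  set η : Euc n → ℝ := fun x => radialWeight a ρ R (‖x‖ ^ 2)
  have hη : ContDiff ℝ 1 η := contDiff_radialWeight_norm_sq hρ
  have hηc : HasCompactSupport η := hasCompactSupport_radialWeight_norm_sq (hρ.trans hρR)
  have hG : Continuous (∇ u) := (contDiff_gradient (m := 2) hu le_rfl).continuous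
  have hX : Continuous fun x => (‖∇ u x‖ ^ 2) ^ 2 / areaDensity (∇ u x) ^ 3 :=
    ((hG.norm.pow 2).pow 2).div (((contDiff_areaDensity (k := 0)).continuous.comp hG).pow 3)
      fun x => pow_ne_zero _ (areaDensity_pos _).ne'
  have hball : MeasurableSet (ball (0 : Euc n) ρ) := measurableSet_ball
  have hann : MeasurableSet (ball (0 : Euc n) (2 * R) \ ball 0 R) :=
    measurableSet_ball.diff measurableSet_ball
  have hZ : Continuous fun x => ‖∇ u x‖ ^ 2 := hG.norm.pow 2
  have hinner := (integrable_indicator_of_continuous_of_isBounded (μ := volume) hX isBounded_ball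
    hball).const_mul ((2 * ρ ^ 2) ^ (-a) / 2)
  have houter := (integrable_indicator_of_continuous_of_isBounded (μ := volume) hZ
    (isBounded_ball.subset Set.sdiff_subset) hann).const_mul (M * (R ^ 2) ^ (-a))
  have hle := (h.integral_dilationDensity_nonneg hf hu hη hηc).trans <|
    integral_mono (integrable_dilationDensity n hG hη hηc) (houter.sub hinner) fun x => by
      simpa only [η, gradient_radialWeight_norm_sq hρ, Pi.sub_apply] using hM ρ R (∇ u) x hρ hρR
  rwa [integral_sub' houter hinner, integral_const_mul, integral_const_mul, integral_indicator hann,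
    integral_indicator hball, sub_nonneg] at hle

/-- The exponent `a` of the main estimate: the largest one with `2a ≤ n - 2` and
`a² - 2a ≤ n - 2`. -/
def criticalExponent (n : ℕ) : ℝ :=
  if n ≤ 10 then ((n : ℝ) - 2) / 2 else √((n : ℝ) - 1) + 1

variable {n : ℕ}

lemma criticalExponent_nonneg (hn : 2 ≤ n) : 0 ≤ criticalExponent n := by
  have hn' : (2 : ℝ) ≤ n := mod_cast hn
  rw [criticalExponent]
  split_ifs
  · linarith
  · positivity

lemma three_le_sqrt_sub_one (hn : 10 < n) : 3 ≤ √((n : ℝ) - 1) :=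
  le_sqrt_of_sq_le (by have : (10 : ℝ) < n := mod_cast hn; linarith)

lemma two_mul_criticalExponent_le (n : ℕ) : 2 * criticalExponent n ≤ n - 2 := by
  rw [criticalExponent]
  split_ifs with hn
  · linarith
  · have hs := three_le_sqrt_sub_one (not_le.1 hn)
    nlinarith [sq_sqrt (sqrt_pos.1 (three_pos.trans_le hs)).le]

lemma criticalExponent_sq_sub_two_mul_le (hn : 2 ≤ n) :
    criticalExponent n ^ 2 - 2 * criticalExponent n ≤ n - 2 := by
  rw [criticalExponent]
  split_ifs with hn₁₀
  · have h₂ : (2 : ℝ) ≤ n := mod_cast hn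
    have h₁₀ : (n : ℝ) ≤ 10 := mod_cast hn₁₀
    nlinarith
  · have hs := three_le_sqrt_sub_one (not_le.1 hn₁₀)
    nlinarith [sq_sqrt (sqrt_pos.1 (three_pos.trans_le hs)).le]

lemma sq_rpow_neg {r : ℝ} (hr : 0 ≤ r) (a : ℝ) : (r ^ 2) ^ (-a) = 1 / r ^ (2 * a) := by
  rw [one_div, ← rpow_neg hr, ← mul_neg, rpow_mul hr, rpow_two]

end MainEstimate

/-- **Key global estimate in the proof of the Liouville theorem.**
Let `n ≥ 2` and set `a = (n-2)/2` if `2 ≤ n ≤ 10` and `a = √(n-1)+1` if `n ≥ 11`.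
If `u` is a `W^{3,1}_loc(ℝⁿ)` stable solution of `div(∇u/√(1+|∇u|²)) = -f(u)` in `ℝⁿ`
(`f ∈ C¹(ℝ)`) and `z = |∇u|²`, then there is a dimensional constant `C > 0` such that
`(1/ρ^{2a}) ∫_{B_ρ} z²/(1+z)^{3/2} ≤ (C/R^{2a}) ∫_{B_{2R}∖B_R} z` for all `0 < ρ < R`. -/
theorem stmt_18 (n : ℕ) (hn : 2 ≤ n) :
    ∃ C > (0:ℝ), ∀ (f : ℝ → ℝ) (u : Euc n → ℝ),
      ContDiff ℝ 1 f →
      ContDiff ℝ 3 u →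
      IsStableSolution (Set.univ : Set (Euc n)) f u →
      ∀ ρ R : ℝ, 0 < ρ → ρ < R →
        1 / ρ ^ (2 * (if n ≤ 10 then ((n:ℝ) - 2)/2 else Real.sqrt ((n:ℝ) - 1) + 1)) *
            ∫ x in ball (0 : Euc n) ρ,
              (‖gradient u x‖ ^ 2) ^ 2 / (1 + ‖gradient u x‖ ^ 2) ^ ((3:ℝ)/2)
          ≤ C / R ^ (2 * (if n ≤ 10 then ((n:ℝ) - 2)/2 else Real.sqrt ((n:ℝ) - 1) + 1)) *
            ∫ x in ball (0 : Euc n) (2*R) \ ball (0 : Euc n) R, ‖gradient u x‖ ^ 2 := by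
  obtain ⟨M, hM₀, hM⟩ := exists_integral_ball_le_of_isStableSolution (criticalExponent_nonneg hn)
    (two_mul_criticalExponent_le n) (criticalExponent_sq_sub_two_mul_le hn)
  simp only [← criticalExponent.eq_def, one_add_norm_sq_rpow_three_halves]
  set a := criticalExponent n
  refine ⟨2 * 2 ^ a * M, by positivity, fun f u hf hu h ρ R hρ hρR => ?_⟩
  have hle := hM f u hf hu h ρ R hρ hρR
  rw [mul_rpow zero_le_two (sq_nonneg ρ), sq_rpow_neg hρ.le, sq_rpow_neg (hρ.trans hρR).le] at hle
  generalize (∫ x in ball (0 : Euc n) ρ, _ : ℝ) = I at hle ⊢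
  generalize (∫ x in ball (0 : Euc n) (2 * R) \ ball 0 R, _ : ℝ) = J at hle ⊢
  have h₂ : (2 : ℝ) ^ (-a) * 2 ^ a = 1 := by rw [← rpow_add two_pos, neg_add_cancel, rpow_zero]
  calc 1 / ρ ^ (2 * a) * I = 2 * 2 ^ a * (2 ^ (-a) * (1 / ρ ^ (2 * a)) / 2 * I) := by
        linear_combination -(1 / ρ ^ (2 * a) * I) * h₂
    _ ≤ 2 * 2 ^ a * (M * (1 / R ^ (2 * a)) * J) := by gcongr
    _ = 2 * 2 ^ a * M / R ^ (2 * a) * J := by ring
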